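/- Let L > 0, let f ∈ L¹(ℝ^d) have compact support, and let φ be a smooth function with compact support contained in the open cube (0,L)^d and with φ = 1 on the support of f. Then for every ξ ∈ ℝ^d the series Σ_{k ∈ ℤ^d} φ̂(ξ − 2πk/L)·f̂(2πk/L) converges absolutely and f̂(ξ) = (2π)^{d/2}·L^{−d}·Σ_{k ∈ ℤ^d} φ̂(ξ − 2πk/L)·f̂(2πk/L). -/

import Mathlib

open MeasureTheory Complex Set
open scoped ENNReal RealInnerProductSpace NNReal

noncomputable section

namespace Paper

variable {d : ℕ}

/-- The Fourier transform, normalized by `(2π)^{-d/2}`. -/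
def FT (f : EuclideanSpace ℝ (Fin d) → ℂ) (ξ : EuclideanSpace ℝ (Fin d)) : ℂ :=
  ((2 * Real.pi) ^ (-(d : ℝ) / 2) : ℝ) *
    ∫ x, f x * Complex.exp (-(⟪x, ξ⟫ : ℝ) * Complex.I)

/-- The short-time Fourier transform `V_φ f (x, ξ)`. -/
def STFT (φ f : EuclideanSpace ℝ (Fin d) → ℂ) (x ξ : EuclideanSpace ℝ (Fin d)) : ℂ :=
  ((2 * Real.pi) ^ (-(d : ℝ) / 2) : ℝ) *
    ∫ y, f y * (starRingEnd ℂ) (φ (y - x)) * Complex.exp (-(⟪ξ, y⟫ : ℝ) * Complex.I)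

/-- A cone in `ℝ^d ∖ {0}`. -/
def IsCone (Γ : Set (EuclideanSpace ℝ (Fin d))) : Prop :=
  (0 : EuclideanSpace ℝ (Fin d)) ∉ Γ ∧ ∀ ξ ∈ Γ, ∀ t : ℝ, 0 < t → t • ξ ∈ Γ

/-- An `s`-cutoff: smooth, compactly supported, with Fourier transform decaying faster
than every `exp (-N |ξ|^{1/s})`. -/
def IsSCutoff (s : ℝ) (φ : EuclideanSpace ℝ (Fin d) → ℂ) : Prop :=
  ContDiff ℝ (⊤ : ℕ∞) φ ∧ HasCompactSupport φ ∧
    ∀ N : ℝ, 0 < N → ∃ C : ℝ, 0 < C ∧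
      ∀ ξ, ‖FT φ ξ‖ ≤ C * Real.exp (-N * ‖ξ‖ ^ (1 / s))

/-- An `s`-admissible weight: positive, measurable, and moderate with respect to an even
submultiplicative weight of sub-exponential growth of order `1/s`. -/
def IsSAdmissible (s : ℝ) (ω : EuclideanSpace ℝ (Fin d) → ℝ) : Prop :=
  Measurable ω ∧ (∀ x, 0 < ω x) ∧
    ∃ v : EuclideanSpace ℝ (Fin d) → ℝ, Measurable v ∧ (∀ x, 0 < v x) ∧
      (∀ x, v (-x) = v x) ∧ (∀ x y, v (x + y) ≤ v x * v y) ∧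
      ∃ C₀ k₀ C₁ : ℝ, 0 < C₀ ∧ 0 < k₀ ∧ 0 < C₁ ∧
        (∀ ξ, v ξ ≤ C₀ * Real.exp (k₀ * ‖ξ‖ ^ (1 / s))) ∧
        ∀ x y, ω (x + y) ≤ C₁ * v x * ω y

/-- The Fourier–Lebesgue seminorm `( ∫_Γ (|f̂| ω)^q )^{1/q}` (ess-sup when `q = ∞`). -/
def FLSemi (ω : EuclideanSpace ℝ (Fin d) → ℝ) (q : ℝ≥0∞)
    (f : EuclideanSpace ℝ (Fin d) → ℂ) (Γ : Set (EuclideanSpace ℝ (Fin d))) : ℝ≥0∞ :=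
  eLpNorm (fun ξ => ‖FT f ξ‖ * ω ξ) q (volume.restrict Γ)

/-- The Fourier–Lebesgue wave-front set `WF_{FL^q_ω} f`. -/
def WF_FL (s : ℝ) (q : ℝ≥0∞) (ω : EuclideanSpace ℝ (Fin d) → ℝ)
    (f : EuclideanSpace ℝ (Fin d) → ℂ) :
    Set (EuclideanSpace ℝ (Fin d) × EuclideanSpace ℝ (Fin d)) :=
  {z | z.2 ≠ 0 ∧ ∀ φ : EuclideanSpace ℝ (Fin d) → ℂ, IsSCutoff s φ → φ z.1 ≠ 0 →
    ∀ Γ : Set (EuclideanSpace ℝ (Fin d)), IsOpen Γ → IsCone Γ → z.2 ∈ Γ →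
      FLSemi ω q (fun x => φ x * f x) Γ = ∞}

/-- The `s`-wave-front set `WF_s f`. -/
def WFs (s : ℝ) (f : EuclideanSpace ℝ (Fin d) → ℂ) :
    Set (EuclideanSpace ℝ (Fin d) × EuclideanSpace ℝ (Fin d)) :=
  {z | z.2 ≠ 0 ∧ ¬ ∃ φ : EuclideanSpace ℝ (Fin d) → ℂ, IsSCutoff s φ ∧
    (∃ U : Set (EuclideanSpace ℝ (Fin d)), IsOpen U ∧ z.1 ∈ U ∧ ∀ x ∈ U, φ x = 1) ∧
    ∃ Γ : Set (EuclideanSpace ℝ (Fin d)), IsOpen Γ ∧ IsCone Γ ∧ z.2 ∈ Γ ∧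
      ∃ C k : ℝ, 0 < C ∧ 0 < k ∧
        ∀ ξ ∈ Γ, ‖FT (fun x => φ x * f x) ξ‖ ≤ C * Real.exp (-k * ‖ξ‖ ^ (1 / s))}

/-- The mixed modulation-space seminorm
`( ∫_Γ ( ∫ |V_g F(x,ξ)|^p dx )^{q/p} ω(ξ)^q dξ )^{1/q}` with the usual
ess-sup interpretations for `p = ∞` or `q = ∞`. -/
def ModSemi (g F : EuclideanSpace ℝ (Fin d) → ℂ) (ω : EuclideanSpace ℝ (Fin d) → ℝ)
    (p q : ℝ≥0∞) (Γ : Set (EuclideanSpace ℝ (Fin d))) : ℝ≥0∞ :=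
  if q = ∞ then
    essSup (fun ξ => eLpNorm (fun x => STFT g F x ξ) p volume * ENNReal.ofReal (ω ξ))
      (volume.restrict Γ)
  else
    (∫⁻ ξ in Γ, (eLpNorm (fun x => STFT g F x ξ) p volume * ENNReal.ofReal (ω ξ)) ^ q.toReal) ^
      (1 / q.toReal)

/-- The modulation wave-front set `WF_{M^{p,q}_ω} f`, with window `g`. -/
def WF_M (s : ℝ) (p q : ℝ≥0∞) (ω : EuclideanSpace ℝ (Fin d) → ℝ)
    (g f : EuclideanSpace ℝ (Fin d) → ℂ) :
    Set (EuclideanSpace ℝ (Fin d) × EuclideanSpace ℝ (Fin d)) :=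
  {z | z.2 ≠ 0 ∧ ∀ φ : EuclideanSpace ℝ (Fin d) → ℂ, IsSCutoff s φ → φ z.1 ≠ 0 →
    ∀ Γ : Set (EuclideanSpace ℝ (Fin d)), IsOpen Γ → IsCone Γ → z.2 ∈ Γ →
      ModSemi g (fun x => φ x * f x) ω p q Γ = ∞}

/-- Reinterpret a plain vector as a point of Euclidean space. -/
def toE (x : Fin d → ℝ) : EuclideanSpace ℝ (Fin d) :=
  (EuclideanSpace.equiv (Fin d) ℝ).symm x

/-- The point `A k` of the lattice `A(ℤ^d)`. -/
def latPt (A : Matrix (Fin d) (Fin d) ℝ) (k : Fin d → ℤ) : EuclideanSpace ℝ (Fin d) :=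
  toE (A.mulVec fun i => (k i : ℝ))

/-- The point `c (Aᵀ)⁻¹ k` of the dual lattice `c (Aᵀ)⁻¹(ℤ^d)`. -/
def dualLatPt (A : Matrix (Fin d) (Fin d) ℝ) (c : ℝ) (k : Fin d → ℤ) :
    EuclideanSpace ℝ (Fin d) :=
  toE (c • (A.transpose⁻¹.mulVec fun i => (k i : ℝ)))

/-- The parallelepiped `x₁ + A([0,1]^d)`. -/
def lattPara (A : Matrix (Fin d) (Fin d) ℝ) (x₁ : EuclideanSpace ℝ (Fin d)) :
    Set (EuclideanSpace ℝ (Fin d)) :=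
  (fun t : Fin d → ℝ => x₁ + toE (A.mulVec t)) '' (Set.univ.pi fun _ => Set.Icc 0 1)

/-- The adjoint short-time Fourier transform `V*_φ F`. -/
def VStar (φ : EuclideanSpace ℝ (Fin d) → ℂ)
    (F : EuclideanSpace ℝ (Fin d) × EuclideanSpace ℝ (Fin d) → ℂ)
    (t : EuclideanSpace ℝ (Fin d)) : ℂ :=
  ((2 * Real.pi) ^ (-(d : ℝ) / 2) : ℝ) *
    ∫ z : EuclideanSpace ℝ (Fin d) × EuclideanSpace ℝ (Fin d),
      F z * Complex.exp ((⟪z.2, t⟫ : ℝ) * Complex.I) * φ (t - z.1)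

/-!
On the cube `a + (0, L)^d` the function `x ↦ φ x * exp (-i⟨x, ξ⟩)` equals the sum of its Fourier
series, whose coefficients are the samples `φ̂ (ξ - 2πk/L)` up to a constant. On the support of `f`
we have `φ = 1`, so there this is an absolutely convergent expansion of the single character
`exp (-i⟨x, ξ⟩)` into the characters `exp (-i⟨x, 2πk/L⟩)`; integrating it against `f` turns it into
the claimed expansion of `f̂ ξ`.
-/

section Lattice

open Filter
open scoped SchwartzMap

lemma tendsto_sub_coe_cofinite_cocompact {G : Type*} [AddCommGroup G] [TopologicalSpace G]
    [IsTopologicalAddGroup G] [T2Space G] {Λ : AddSubgroup G} (hΛ : IsDiscrete (Λ : Set G))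
    (v : G) : Tendsto (fun z : Λ => v - z) cofinite (cocompact G) :=
  (Homeomorph.subLeft v).isClosedEmbedding.tendsto_cocompact.comp
    (Λ.tendsto_coe_cofinite_of_discrete hΛ)

variable {E F : Type*} [NormedAddCommGroup E] [NormedSpace ℝ E] [FiniteDimensional ℝ E]
  [NormedAddCommGroup F] [NormedSpace ℝ F] [CompleteSpace F]

lemma summable_schwartzMap_sub_coe (g : 𝓢(E, F)) (Λ : Submodule ℤ E) [hΛ : DiscreteTopology Λ]
    (v : E) : Summable fun z : Λ => g (v - z) := by
  have htend : Tendsto (fun z : Λ => v - z) cofinite (cocompact E) :=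
    tendsto_sub_coe_cofinite_cocompact (Λ := Λ.toAddSubgroup)
      (SetLike.isDiscrete_iff_discreteTopology.2 hΛ) v
  have hdecay := (g.isBigO_cocompact_zpow (-(Module.finrank ℤ Λ) - 1)).comp_tendsto htend
  have hsum := ZLattice.summable_norm_sub_zpow Λ (-(Module.finrank ℤ Λ) - 1) (by lia) v
  refine summable_of_isBigO hsum ?_
  simpa only [Function.comp_def, norm_sub_rev v] using hdecay

lemma summable_schwartzMap_sub_sum_zsmul {ι : Type*} [Fintype ι] (g : 𝓢(E, F))
    (b : Module.Basis ι ℝ E) (v : E) : Summable fun k : ι → ℤ => g (v - ∑ i, k i • b i) := by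
  have h := (b.restrictScalars ℤ).equivFun.symm.toEquiv.summable_iff.2
    (summable_schwartzMap_sub_coe g (Submodule.span ℤ (range b)) v)
  simpa [Function.comp_def, Module.Basis.equivFun_symm_apply] using h

end Lattice

section UnitTorus

open UnitAddTorus

lemma eq_of_coe_addCircle_eq_of_mem_Ioo {p b x y : ℝ} [Fact (0 < p)] (hx : x ∈ Ioo b (b + p))
    (hy : y ∈ Icc b (b + p)) (hxy : (x : AddCircle p) = y) : x = y := by
  rcases hy.2.lt_or_eq with hlt | rfl
  · exact (AddCircle.coe_eq_coe_iff_of_mem_Ico (Ioo_subset_Ico_self hx) ⟨hy.1, hlt⟩).1 hxy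
  · exact (AddCircle.coe_eq_coe_iff_of_mem_Ioc (Ioo_subset_Ioc_self hx)
      (right_mem_Ioc.2 (hx.1.trans hx.2))).1 hxy

variable {ι : Type*}

lemma isQuotientMap_Icc_unitAddTorus (a : ι → ℝ) :
    Topology.IsQuotientMap fun (t : Icc a (a + 1)) i => (t.1 i : UnitAddCircle) := by
  have hcont : Continuous fun (t : Icc a (a + 1)) i => (t.1 i : UnitAddCircle) :=
    continuous_pi fun i => (AddCircle.continuous_mk' 1).comp
      ((continuous_apply i).comp continuous_subtype_val)
  refine .of_surjective_continuous (fun s => ?_) hcont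
  have hmem (i : ι) := (AddCircle.equivIoc 1 (a i) (s i)).2
  exact ⟨⟨fun i => AddCircle.equivIoc 1 (a i) (s i), fun i => (hmem i).1.le, fun i => (hmem i).2⟩,
    funext fun i => (AddCircle.equivIoc 1 (a i)).symm_apply_apply (s i)⟩

lemma exists_continuousMap_unitAddTorus_coe_eq {E : Type*} [TopologicalSpace E] [Zero E]
    {g : (ι → ℝ) → E} {a : ι → ℝ} (hg : Continuous g)
    (hsupp : Function.support g ⊆ univ.pi fun i => Ioo (a i) (a i + 1)) :
    ∃ G : C(UnitAddTorus ι, E), ∀ t ∈ Icc a (a + 1), G (fun i => t i) = g t := by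
  let q : C(Icc a (a + 1), UnitAddTorus ι) :=
    ⟨_, (isQuotientMap_Icc_unitAddTorus a).continuous⟩
  have hq : Topology.IsQuotientMap q := isQuotientMap_Icc_unitAddTorus a
  have eq_of_ne_zero {s t : Icc a (a + 1)} (hs : g s ≠ 0) (hst : q s = q t) : s = t :=
    Subtype.ext <| funext fun i => eq_of_coe_addCircle_eq_of_mem_Ioo (hsupp hs i (mem_univ i))
      ⟨t.2.1 i, t.2.2 i⟩ (congrFun hst i)
  have hfactors : Function.FactorsThrough (fun t : Icc a (a + 1) => g t) q := by
    intro s t hst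
    by_cases hs : g s = 0
    · by_cases ht : g t = 0
      · exact hs.trans ht.symm
      · rw [eq_of_ne_zero ht hst.symm]
    · rw [eq_of_ne_zero hs hst]
  exact ⟨hq.lift ⟨_, hg.comp continuous_subtype_val⟩ hfactors, fun t ht =>
    DFunLike.congr_fun (hq.lift_comp ⟨_, hg.comp continuous_subtype_val⟩ hfactors) ⟨t, ht⟩⟩

variable [Fintype ι] {g : (ι → ℝ) → ℂ} {a : ι → ℝ}

lemma mFourierCoeff_eq_integral_of_support_subset {G : UnitAddTorus ι → ℂ}
    (hsupp : Function.support g ⊆ univ.pi fun i => Ioo (a i) (a i + 1))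
    (hG : ∀ t ∈ Icc a (a + 1), G (fun i => t i) = g t) (k : ι → ℤ) :
    mFourierCoeff G k = ∫ t, mFourier (-k) (fun i => (t i : UnitAddCircle)) * g t := by
  have hmeas : MeasurableSet {t : ι → ℝ | ∀ i, t i ∈ Ioc (a i) (a i + 1)} :=
    .univ_pi' fun _ => measurableSet_Ioc
  have hzero (t : ι → ℝ) (ht : t ∉ {t | ∀ i, t i ∈ Ioc (a i) (a i + 1)}) :
      mFourier (-k) (fun i => (t i : UnitAddCircle)) * g t = 0 := by
    have hgt : g t = 0 := by
      by_contra hne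
      exact ht fun i => Ioo_subset_Ioc_self (hsupp hne i (mem_univ i))
    rw [hgt, mul_zero]
  rw [mFourierCoeff_eq_integral G k a, ← setIntegral_eq_integral_of_forall_compl_eq_zero hzero]
  refine setIntegral_congr_fun hmeas fun t ht => ?_
  simp only [hG t ⟨fun i => (ht i).1.le, fun i => (ht i).2⟩, smul_eq_mul]

lemma hasSum_mFourier_of_support_subset (hg : Continuous g)
    (hsupp : Function.support g ⊆ univ.pi fun i => Ioo (a i) (a i + 1))
    (hsum : Summable fun k : ι → ℤ =>
      ∫ t, mFourier (-k) (fun i => (t i : UnitAddCircle)) * g t)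
    {t : ι → ℝ} (ht : t ∈ Icc a (a + 1)) :
    HasSum (fun k : ι → ℤ => (∫ s, mFourier (-k) (fun i => (s i : UnitAddCircle)) * g s) *
      mFourier k (fun i => (t i : UnitAddCircle))) (g t) := by
  obtain ⟨G, hG⟩ := exists_continuousMap_unitAddTorus_coe_eq hg hsupp
  simp only [← mFourierCoeff_eq_integral_of_support_subset hsupp hG] at hsum ⊢
  simpa only [hG t ht, smul_eq_mul] using
    hasSum_mFourier_series_apply_of_summable hsum fun i => (t i : UnitAddCircle)

end UnitTorus

section FourierTransform

open scoped FourierTransform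

lemma FT_eq_fourier (f : EuclideanSpace ℝ (Fin d) → ℂ) (η : EuclideanSpace ℝ (Fin d)) :
    FT f η = ((2 * Real.pi) ^ (-(d : ℝ) / 2) : ℝ) * 𝓕 f ((2 * Real.pi)⁻¹ • η) := by
  rw [FT, Real.fourier_eq']
  congr 2 with x
  rw [smul_eq_mul, mul_comm, inner_smul_right, ← ofReal_neg]
  congr 4
  field_simp

lemma FT_mul_exp_neg_inner (φ : EuclideanSpace ℝ (Fin d) → ℂ) (ξ η : EuclideanSpace ℝ (Fin d)) :
    FT (fun x => φ x * exp (-(⟪x, ξ⟫ : ℝ) * I)) η = FT φ (ξ + η) := by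
  simp only [FT, inner_add_right, ofReal_add, neg_add, add_mul, exp_add, mul_assoc]

lemma norm_exp_neg_inner_mul_I {V : Type*} [NormedAddCommGroup V] [InnerProductSpace ℝ V]
    (x η : V) : ‖exp (-(⟪x, η⟫ : ℝ) * I)‖ = 1 := by
  rw [← ofReal_neg, norm_exp_ofReal_mul_I]

lemma hasSum_mul_FT {κ : Type*} [Countable κ] {f : EuclideanSpace ℝ (Fin d) → ℂ}
    (hf : Integrable f) {c : κ → ℂ} (hc : Summable c) {η : κ → EuclideanSpace ℝ (Fin d)}
    {ξ : EuclideanSpace ℝ (Fin d)}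
    (hexp : ∀ x ∈ Function.support f,
      HasSum (fun k => c k * exp (-(⟪x, η k⟫ : ℝ) * I)) (exp (-(⟪x, ξ⟫ : ℝ) * I))) :
    HasSum (fun k => c k * FT f (η k)) (FT f ξ) := by
  have hint (k : κ) : Integrable fun x => c k * (f x * exp (-(⟪x, η k⟫ : ℝ) * I)) :=
    (hf.mul_bdd (c := 1) (Continuous.aestronglyMeasurable (by fun_prop))
      (.of_forall fun x => (norm_exp_neg_inner_mul_I x (η k)).le)).const_mul _
  have hnorm : Summable fun k => ∫ x, ‖c k * (f x * exp (-(⟪x, η k⟫ : ℝ) * I))‖ := by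
    simpa only [norm_mul, norm_exp_neg_inner_mul_I, mul_one, integral_const_mul] using
      hc.norm.mul_right (∫ x, ‖f x‖)
  have hpoint (x : EuclideanSpace ℝ (Fin d)) :
      ∑' k, c k * (f x * exp (-(⟪x, η k⟫ : ℝ) * I)) = f x * exp (-(⟪x, ξ⟫ : ℝ) * I) := by
    by_cases hx : f x = 0
    · simp only [hx, zero_mul, mul_zero, tsum_zero]
    · simpa only [mul_left_comm] using ((hexp x hx).mul_left (f x)).tsum_eq
  have hswap := hasSum_integral_of_summable_integral_norm hint hnorm
  simp only [hpoint, integral_const_mul] at hswap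
  simpa only [FT, mul_left_comm (c _)] using
    hswap.mul_left (((2 * Real.pi) ^ (-(d : ℝ) / 2) : ℝ) : ℂ)

end FourierTransform

section TorusFreq

open scoped FourierTransform SchwartzMap

/-- The frequency `2πk/L` of the `k`-th character of the torus `(ℝ/Lℤ)^d`. -/
def torusFreq (L : ℝ) (k : Fin d → ℤ) : EuclideanSpace ℝ (Fin d) :=
  toE fun i => 2 * Real.pi * (k i : ℝ) / L

lemma torusFreq_neg (L : ℝ) (k : Fin d → ℤ) : torusFreq L (-k) = -torusFreq L k := by
  ext i
  simp [torusFreq, toE, neg_div]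

variable {L : ℝ}

lemma inner_toE_smul_torusFreq (hL : L ≠ 0) (t : Fin d → ℝ) (k : Fin d → ℤ) :
    (⟪toE (L • t), torusFreq L k⟫ : ℝ) = ∑ i, 2 * Real.pi * (k i : ℝ) * t i := by
  simp only [torusFreq, toE, PiLp.inner_apply]
  refine Finset.sum_congr rfl fun i _ => ?_
  calc 2 * Real.pi * (k i : ℝ) / L * (L * t i) = 2 * Real.pi * (k i : ℝ) * t i := by field_simp

lemma mFourier_coe_eq_exp_inner (hL : L ≠ 0) (k : Fin d → ℤ) (t : Fin d → ℝ) :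
    UnitAddTorus.mFourier k (fun i => (t i : UnitAddCircle)) =
      exp ((⟪toE (L • t), torusFreq L k⟫ : ℝ) * I) := by
  simp only [UnitAddTorus.mFourier, ContinuousMap.coe_mk, fourier_coe_apply, ← exp_sum,
    inner_toE_smul_torusFreq hL]
  push_cast
  rw [Finset.sum_mul]
  congr! 2
  ring

lemma integral_comp_toE_smul {E : Type*} [NormedAddCommGroup E] [NormedSpace ℝ E] (hL : 0 ≤ L)
    (h : EuclideanSpace ℝ (Fin d) → E) :
    ∫ t : Fin d → ℝ, h (toE (L • t)) = (L ^ d)⁻¹ • ∫ x, h x := by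
  have htoE : ∫ t : Fin d → ℝ, h (toE t) = ∫ x, h x :=
    (PiLp.volume_preserving_toLp (Fin d)).integral_comp
      (MeasurableEquiv.toLp 2 (Fin d → ℝ)).measurableEmbedding h
  rw [Measure.integral_comp_smul_of_nonneg volume (fun t => h (toE t)) L (hR := hL), htoE,
    Module.finrank_fin_fun]

lemma integral_mFourier_neg_mul_comp_toE_smul (hL : 0 < L) (ψ : EuclideanSpace ℝ (Fin d) → ℂ)
    (k : Fin d → ℤ) :
    ∫ t : Fin d → ℝ, UnitAddTorus.mFourier (-k) (fun i => (t i : UnitAddCircle)) *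
        ψ (toE (L • t)) =
      (((2 * Real.pi) ^ ((d : ℝ) / 2) / L ^ d : ℝ) : ℂ) * FT ψ (torusFreq L k) := by
  have hconst : (2 * Real.pi) ^ ((d : ℝ) / 2) / L ^ d * (2 * Real.pi) ^ (-(d : ℝ) / 2) =
      (L ^ d)⁻¹ := by
    rw [div_mul_eq_mul_div, ← Real.rpow_add (by positivity), neg_div, add_neg_cancel,
      Real.rpow_zero, one_div]
  rw [FT, ← mul_assoc, ← ofReal_mul, hconst, ← real_smul, ← integral_comp_toE_smul hL.le]
  simp only [mFourier_coe_eq_exp_inner hL.ne', torusFreq_neg, inner_neg_right, ofReal_neg, mul_comm]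

lemma hasSum_FT_torusFreq_mul_exp (hL : 0 < L) {ψ : EuclideanSpace ℝ (Fin d) → ℂ}
    {a : Fin d → ℝ} (hψ : Continuous ψ)
    (hsupp : Function.support ψ ⊆ {x | ∀ i, x i ∈ Ioo (a i) (a i + L)})
    (hsum : Summable fun k : Fin d → ℤ => FT ψ (torusFreq L k))
    {x : EuclideanSpace ℝ (Fin d)} (hx : ∀ i, x i ∈ Icc (a i) (a i + L)) :
    HasSum (fun k : Fin d → ℤ =>
      (((2 * Real.pi) ^ ((d : ℝ) / 2) / L ^ d : ℝ) : ℂ) * FT ψ (torusFreq L k) *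
        exp ((⟪x, torusFreq L k⟫ : ℝ) * I)) (ψ x) := by
  have hcont : Continuous fun t : Fin d → ℝ => ψ (toE (L • t)) :=
    hψ.comp ((EuclideanSpace.equiv (Fin d) ℝ).symm.continuous.comp (continuous_const_smul L))
  have hsupp' : Function.support (fun t : Fin d → ℝ => ψ (toE (L • t))) ⊆
      univ.pi fun i => Ioo ((L⁻¹ • a) i) ((L⁻¹ • a) i + 1) := by
    intro t ht i _
    have hi : L * t i ∈ Ioo (a i) (a i + L) := hsupp ht i
    simp only [Pi.smul_apply, smul_eq_mul, mem_Ioo] at hi ⊢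
    rw [inv_mul_lt_iff₀ hL, inv_mul_eq_div, div_add_one hL.ne', lt_div_iff₀' hL]
    exact hi
  have hx' : L⁻¹ • x.ofLp ∈ Icc (L⁻¹ • a) (L⁻¹ • a + 1) := by
    have hone : L⁻¹ * L = 1 := inv_mul_cancel₀ hL.ne'
    constructor <;> intro i <;>
    simp only [Pi.smul_apply, Pi.add_apply, Pi.one_apply, smul_eq_mul, ← hone, ← mul_add]
    · gcongr; exact (hx i).1
    · gcongr; exact (hx i).2
  have hxeq : toE (L • L⁻¹ • x.ofLp) = x := by
    rw [smul_inv_smul₀ hL.ne']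
    rfl
  have hseries := hasSum_mFourier_of_support_subset hcont hsupp'
    (by simpa only [integral_mFourier_neg_mul_comp_toE_smul hL] using hsum.mul_left _) hx'
  simp only [integral_mFourier_neg_mul_comp_toE_smul hL] at hseries
  simpa only [mFourier_coe_eq_exp_inner hL.ne', hxeq] using hseries

lemma hasSum_FT_sub_torusFreq_mul_exp (hL : 0 < L) {φ : EuclideanSpace ℝ (Fin d) → ℂ}
    {a : Fin d → ℝ} (hφ : Continuous φ)
    (hsupp : Function.support φ ⊆ {x | ∀ i, x i ∈ Ioo (a i) (a i + L)})
    {ξ : EuclideanSpace ℝ (Fin d)}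
    (hsum : Summable fun k : Fin d → ℤ => FT φ (ξ - torusFreq L k))
    {x : EuclideanSpace ℝ (Fin d)} (hx : ∀ i, x i ∈ Icc (a i) (a i + L)) :
    HasSum (fun k : Fin d → ℤ =>
      (((2 * Real.pi) ^ ((d : ℝ) / 2) / L ^ d : ℝ) : ℂ) * FT φ (ξ - torusFreq L k) *
        exp (-(⟪x, torusFreq L k⟫ : ℝ) * I)) (φ x * exp (-(⟪x, ξ⟫ : ℝ) * I)) := by
  have hsum_neg : Summable fun k : Fin d → ℤ => FT φ (ξ + torusFreq L k) := by
    rw [← (Equiv.neg (Fin d → ℤ)).summable_iff]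
    simpa only [Function.comp_def, Equiv.neg_apply, torusFreq_neg, ← sub_eq_add_neg] using hsum
  have hseries := hasSum_FT_torusFreq_mul_exp hL (ψ := fun x => φ x * exp (-(⟪x, ξ⟫ : ℝ) * I))
    (by fun_prop) ((Function.support_mul_subset_left _ _).trans hsupp)
    (by simpa only [FT_mul_exp_neg_inner] using hsum_neg) hx
  rw [← (Equiv.neg (Fin d → ℤ)).hasSum_iff] at hseries
  simpa only [Function.comp_def, Equiv.neg_apply, FT_mul_exp_neg_inner, torusFreq_neg,
    ← sub_eq_add_neg, inner_neg_right, ofReal_neg] using hseries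

lemma inv_two_pi_smul_torusFreq (L : ℝ) (k : Fin d → ℤ) :
    (2 * Real.pi)⁻¹ • torusFreq L k =
      ∑ i, k i • (L⁻¹ • EuclideanSpace.basisFun (Fin d) ℝ i) := by
  ext j
  have hcoord : (∑ i, k i • (L⁻¹ • EuclideanSpace.basisFun (Fin d) ℝ i)) j = k j / L := by
    simp [Pi.single_apply, div_eq_inv_mul]
  calc ((2 * Real.pi)⁻¹ • torusFreq L k) j = (2 * Real.pi)⁻¹ * (2 * Real.pi * k j / L) := rfl
    _ = k j / L := by field_simp
    _ = _ := hcoord.symm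

lemma summable_FT_sub_torusFreq (hL : L ≠ 0) {φ : EuclideanSpace ℝ (Fin d) → ℂ}
    (hφ : ContDiff ℝ (⊤ : ℕ∞) φ) (hφc : HasCompactSupport φ) (ξ : EuclideanSpace ℝ (Fin d)) :
    Summable fun k : Fin d → ℤ => FT φ (ξ - torusFreq L k) := by
  have hunit (_ : Fin d) : IsUnit L⁻¹ := (inv_ne_zero hL).isUnit
  let Φ : 𝓢(EuclideanSpace ℝ (Fin d), ℂ) := 𝓕 (hφc.toSchwartzMap hφ)
  have hcoe : ⇑Φ = 𝓕 φ := SchwartzMap.fourier_coe (hφc.toSchwartzMap hφ)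
  have h := summable_schwartzMap_sub_sum_zsmul Φ
    ((EuclideanSpace.basisFun (Fin d) ℝ).toBasis.isUnitSMul hunit) ((2 * Real.pi)⁻¹ • ξ)
  simp only [Module.Basis.isUnitSMul_apply, OrthonormalBasis.coe_toBasis,
    ← inv_two_pi_smul_torusFreq, ← smul_sub, hcoe] at h
  simpa only [FT_eq_fourier] using h.mul_left _

end TorusFreq

theorem stmt14_general {d : ℕ} {L : ℝ} (hL : 0 < L) {a : Fin d → ℝ}
    {f φ : EuclideanSpace ℝ (Fin d) → ℂ} (hf : Integrable f) (hφ : Continuous φ)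
    (hφsupp : Function.support φ ⊆ {x | ∀ i, x i ∈ Ioo (a i) (a i + L)})
    (hφ1 : ∀ x ∈ Function.support f, φ x = 1) {ξ : EuclideanSpace ℝ (Fin d)}
    (hsum : Summable fun k : Fin d → ℤ => FT φ (ξ - torusFreq L k)) :
    (Summable fun k : Fin d → ℤ => ‖FT φ (ξ - torusFreq L k) * FT f (torusFreq L k)‖) ∧
      FT f ξ = (((2 * Real.pi) ^ ((d : ℝ) / 2) / L ^ d : ℝ) : ℂ) *
        ∑' k : Fin d → ℤ, FT φ (ξ - torusFreq L k) * FT f (torusFreq L k) := by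
  have hseries : HasSum (fun k : Fin d → ℤ =>
      (((2 * Real.pi) ^ ((d : ℝ) / 2) / L ^ d : ℝ) : ℂ) * FT φ (ξ - torusFreq L k) *
        FT f (torusFreq L k)) (FT f ξ) := by
    refine hasSum_mul_FT hf (hsum.mul_left _) fun x hx => ?_
    have hxφ : x ∈ Function.support φ := by simp [hφ1 x hx]
    simpa only [hφ1 x hx, one_mul] using hasSum_FT_sub_torusFreq_mul_exp hL hφ hφsupp hsum
      fun i => Ioo_subset_Icc_self (hφsupp hxφ i)
  have hconst : (((2 * Real.pi) ^ ((d : ℝ) / 2) / L ^ d : ℝ) : ℂ) ≠ 0 :=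
    ofReal_ne_zero.2 (by positivity)
  simp only [mul_assoc] at hseries
  exact ⟨((summable_mul_left_iff hconst).1 hseries.summable).norm,
    by rw [← tsum_mul_left, hseries.tsum_eq]⟩

theorem stmt14 {d : ℕ} (L : ℝ) (hL : 0 < L)
    (f φ : EuclideanSpace ℝ (Fin d) → ℂ)
    (hf : Integrable f) (hfc : HasCompactSupport f)
    (hφsm : ContDiff ℝ (⊤ : ℕ∞) φ) (hφc : HasCompactSupport φ)
    (hφsupp : tsupport φ ⊆ {x : EuclideanSpace ℝ (Fin d) | ∀ i, x i ∈ Set.Ioo 0 L})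
    (hφ1 : ∀ x ∈ tsupport f, φ x = 1) :
    ∀ ξ : EuclideanSpace ℝ (Fin d),
      (Summable fun k : Fin d → ℤ =>
        ‖FT φ (ξ - toE fun i => 2 * Real.pi * (k i : ℝ) / L) *
          FT f (toE fun i => 2 * Real.pi * (k i : ℝ) / L)‖) ∧
      FT f ξ = (((2 * Real.pi) ^ ((d : ℝ) / 2) / L ^ d : ℝ) : ℂ) *
        ∑' k : Fin d → ℤ,
          FT φ (ξ - toE fun i => 2 * Real.pi * (k i : ℝ) / L) *
            FT f (toE fun i => 2 * Real.pi * (k i : ℝ) / L) := by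
  exact fun ξ => stmt14_general (a := 0) hL hf hφsm.continuous
    (by simpa only [Pi.zero_apply, zero_add] using (subset_tsupport φ).trans hφsupp)
    (fun x hx => hφ1 x (subset_tsupport f hx)) (summable_FT_sub_torusFreq hL.ne' hφsm hφc ξ)

end Paper
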